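/- Let n ≥ 2 and 0 < σ < 1. Let G₁ : Γ₊ → (0,∞) be smooth, symmetric, strictly increasing in each argument, positively homogeneous of degree one and inverse concave, and let G₂ : Γ₊ → (0,∞) be smooth, symmetric, strictly increasing in each argument, positively homogeneous of degree one and inverse concave with dual (G₂)_* approaching zero on the boundary of Γ₊. Then F = G₁^σ G₂^{1−σ} is smooth, symmetric, strictly increasing in each argument, positively homogeneous of degree one, inverse concave (indeed F_* = (G₁)_*^σ (G₂)_*^{1−σ}), and its dual F_* approaches zero on the boundary of Γ₊. -/

import Mathlib

/-!
The map `(u, v) ↦ u ^ a * v ^ b` with `a + b = 1` is concave and increasing on the closed quadrant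
by Hölder's inequality, and dualization commutes with it, so inverse concavity passes from `G₁` and
`G₂` to their geometric mean. A nonnegative concave function on `Γ₊` is bounded on sets that are
bounded above: reflecting `z ≤ p` in `p` stays in `Γ₊`, and concavity at the midpoint `p` gives
`f z ≤ 2 * f p`. Thus along a sequence converging to the boundary the factor coming from `G₁` stays
bounded, while the one coming from `G₂` tends to zero.
-/

open Filter Topology Matrix

noncomputable section

/-- The open positive cone Γ₊ ⊂ ℝⁿ. -/
def posCone (n : ℕ) : Set (Fin n → ℝ) := {x | ∀ i, 0 < x i}

/-- The dual function f_*(x) = f(x₁⁻¹,…,xₙ⁻¹)⁻¹. -/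
def dualF (n : ℕ) (f : (Fin n → ℝ) → ℝ) : (Fin n → ℝ) → ℝ :=
  fun x => (f fun i => (x i)⁻¹)⁻¹

/-- First partial derivative ḟ^i(x) = ∂f/∂x_i(x). -/
def D1 (n : ℕ) (f : (Fin n → ℝ) → ℝ) (x : Fin n → ℝ) (i : Fin n) : ℝ :=
  fderiv ℝ f x (Pi.single i 1)

/-- Second partial derivative f̈^{ij}(x) = ∂²f/∂x_i∂x_j(x). -/
def D2 (n : ℕ) (f : (Fin n → ℝ) → ℝ) (x : Fin n → ℝ) (i j : Fin n) : ℝ :=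
  fderiv ℝ (fun y => fderiv ℝ f y (Pi.single i 1)) x (Pi.single j 1)

section GeometricMean

variable {a b : ℝ}

lemma mul_rpow_mul_mul_rpow {k u v : ℝ} (hk : 0 ≤ k) (hu : 0 ≤ u) (hv : 0 ≤ v) (hab : a + b = 1) :
    (k * u) ^ a * (k * v) ^ b = k * (u ^ a * v ^ b) := by
  have hk_pow : k ^ a * k ^ b = k := by
    rw [← Real.rpow_add' hk (by simp [hab]), hab, Real.rpow_one]
  rw [Real.mul_rpow hk hu, Real.mul_rpow hk hv, mul_mul_mul_comm, hk_pow]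

lemma sum_rpow_mul_rpow_le {ι : Type*} (s : Finset ι) {u v : ι → ℝ} (ha : 0 < a) (hb : 0 < b)
    (hab : a + b = 1) (hu : ∀ i ∈ s, 0 ≤ u i) (hv : ∀ i ∈ s, 0 ≤ v i) :
    ∑ i ∈ s, u i ^ a * v i ^ b ≤ (∑ i ∈ s, u i) ^ a * (∑ i ∈ s, v i) ^ b := by
  have holder := Real.inner_le_Lp_mul_Lq_of_nonneg s (.inv_inv ha hb hab)
    (fun i hi => Real.rpow_nonneg (hu i hi) a) (fun i hi => Real.rpow_nonneg (hv i hi) b)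
  have sum_u : ∑ i ∈ s, (u i ^ a) ^ a⁻¹ = ∑ i ∈ s, u i :=
    Finset.sum_congr rfl fun i hi => Real.rpow_rpow_inv (hu i hi) ha.ne'
  have sum_v : ∑ i ∈ s, (v i ^ b) ^ b⁻¹ = ∑ i ∈ s, v i :=
    Finset.sum_congr rfl fun i hi => Real.rpow_rpow_inv (hv i hi) hb.ne'
  rwa [sum_u, sum_v, one_div, one_div, inv_inv, inv_inv] at holder

lemma rpow_mul_rpow_add_rpow_mul_rpow_le {u₁ u₂ v₁ v₂ : ℝ} (ha : 0 < a) (hb : 0 < b)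
    (hab : a + b = 1) (hu₁ : 0 ≤ u₁) (hu₂ : 0 ≤ u₂) (hv₁ : 0 ≤ v₁) (hv₂ : 0 ≤ v₂) :
    u₁ ^ a * v₁ ^ b + u₂ ^ a * v₂ ^ b ≤ (u₁ + u₂) ^ a * (v₁ + v₂) ^ b := by
  simpa using sum_rpow_mul_rpow_le Finset.univ (u := ![u₁, u₂]) (v := ![v₁, v₂]) ha hb hab
    (by simp [hu₁, hu₂]) (by simp [hv₁, hv₂])

lemma concaveOn_rpow_mul_rpow {E : Type*} [AddCommMonoid E] [SMul ℝ E] {s : Set E} {f g : E → ℝ}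
    (ha : 0 < a) (hb : 0 < b) (hab : a + b = 1) (hf : ConcaveOn ℝ s f) (hg : ConcaveOn ℝ s g)
    (hf₀ : ∀ x ∈ s, 0 ≤ f x) (hg₀ : ∀ x ∈ s, 0 ≤ g x) :
    ConcaveOn ℝ s fun x => f x ^ a * g x ^ b := by
  refine ⟨hf.1, fun x hx y hy p q hp hq hpq => ?_⟩
  have hfx := mul_nonneg hp (hf₀ x hx)
  have hfy := mul_nonneg hq (hf₀ y hy)
  have hgx := mul_nonneg hp (hg₀ x hx)
  have hgy := mul_nonneg hq (hg₀ y hy)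
  calc p * (f x ^ a * g x ^ b) + q * (f y ^ a * g y ^ b)
      = (p * f x) ^ a * (p * g x) ^ b + (q * f y) ^ a * (q * g y) ^ b := by
        rw [mul_rpow_mul_mul_rpow hp (hf₀ x hx) (hg₀ x hx) hab,
          mul_rpow_mul_mul_rpow hq (hf₀ y hy) (hg₀ y hy) hab]
    _ ≤ (p * f x + q * f y) ^ a * (p * g x + q * g y) ^ b :=
        rpow_mul_rpow_add_rpow_mul_rpow_le ha hb hab hfx hfy hgx hgy
    _ ≤ f (p • x + q • y) ^ a * g (p • x + q • y) ^ b := by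
        gcongr
        · exact Real.rpow_nonneg (hf₀ _ (hf.1 hx hy hp hq hpq)) a
        · exact hf.2 hx hy hp hq hpq
        · exact hg.2 hx hy hp hq hpq

lemma fderiv_rpow_mul_rpow_apply_pos {E : Type*} [NormedAddCommGroup E] [NormedSpace ℝ E]
    {f g : E → ℝ} {x v : E} (ha : 0 < a) (hb : 0 < b) (hf : DifferentiableAt ℝ f x)
    (hg : DifferentiableAt ℝ g x) (hfx : 0 < f x) (hgx : 0 < g x) (hf' : 0 < fderiv ℝ f x v)
    (hg' : 0 < fderiv ℝ g x v) :
    0 < fderiv ℝ (fun y => f y ^ a * g y ^ b) x v := by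
  have product_rule := (hf.hasFDerivAt.rpow_const (p := a) (.inl hfx.ne')).fun_mul
    (hg.hasFDerivAt.rpow_const (p := b) (.inl hgx.ne'))
  rw [product_rule.fderiv]
  simp only [_root_.add_apply, _root_.smul_apply, smul_eq_mul]
  positivity

lemma tendsto_rpow_mul_rpow_zero {α : Type*} {l : Filter α} {u v : α → ℝ} (ha : 0 ≤ a)
    (hb : 0 < b) (hu₀ : ∀ᶠ x in l, 0 ≤ u x) (hu : IsBoundedUnder (· ≤ ·) l u)
    (hv : Tendsto v l (𝓝 0)) :
    Tendsto (fun x => u x ^ a * v x ^ b) l (𝓝 0) := by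
  obtain ⟨B, hB⟩ := hu.eventually_le
  have hv_rpow : Tendsto (fun x => v x ^ b) l (𝓝 0) := by
    simpa [Real.zero_rpow hb.ne'] using hv.rpow_const (.inr hb.le)
  refine bdd_le_mul_tendsto_zero (b := 0) (B := B ^ a) ?_ ?_ hv_rpow
  · filter_upwards [hu₀] with x hx using Real.rpow_nonneg hx a
  · filter_upwards [hu₀, hB] with x hx hxB using Real.rpow_le_rpow hx hxB ha

end GeometricMean

lemma le_two_mul_midpoint_of_concaveOn {E : Type*} [AddCommGroup E] [Module ℝ E] {s : Set E}
    {f : E → ℝ} (hf : ConcaveOn ℝ s f) {x y : E} (hx : x ∈ s) (hy : y ∈ s) (hfy : 0 ≤ f y) :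
    f x ≤ 2 * f (midpoint ℝ x y) := by
  have hmid : 2⁻¹ * f x + 2⁻¹ * f y ≤ f (midpoint ℝ x y) := by
    rw [midpoint_eq_smul_add, smul_add, invOf_eq_inv]
    exact hf.2 hx hy (by norm_num) (by norm_num) (by norm_num)
  linarith

section PositiveCone

variable {n : ℕ} {a b : ℝ} {f g : (Fin n → ℝ) → ℝ}

lemma isOpen_posCone (n : ℕ) : IsOpen (posCone n) := by
  simp only [posCone, Set.ofPred_forall]
  exact isOpen_iInter_of_finite fun i => isOpen_lt continuous_const (continuous_apply i)

lemma inv_mem_posCone {x : Fin n → ℝ} (hx : x ∈ posCone n) : x⁻¹ ∈ posCone n :=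
  fun i => inv_pos.2 (hx i)

lemma bddAbove_image_of_concaveOn_posCone (hf : ConcaveOn ℝ (posCone n) f)
    (hf₀ : ∀ x ∈ posCone n, 0 ≤ f x) {s : Set (Fin n → ℝ)} (hs : s ⊆ posCone n)
    (hs_bdd : BddAbove s) : BddAbove (f '' s) := by
  obtain ⟨p, hp⟩ := hs_bdd
  refine ⟨2 * f p, Set.forall_mem_image.2 fun z hz => ?_⟩
  have reflection_mem : Equiv.pointReflection p z ∈ posCone n := fun i => by
    have hz_pos : 0 < z i := hs hz i
    have hz_le : z i ≤ p i := hp hz i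
    simp only [Equiv.pointReflection_apply, vsub_eq_sub, vadd_eq_add, Pi.add_apply, Pi.sub_apply]
    linarith
  simpa using le_two_mul_midpoint_of_concaveOn hf (hs hz) reflection_mem (hf₀ _ reflection_mem)

lemma D1_rpow_mul_rpow_pos (ha : 0 < a) (hb : 0 < b) (hf : DifferentiableOn ℝ f (posCone n))
    (hg : DifferentiableOn ℝ g (posCone n)) {x : Fin n → ℝ} (hx : x ∈ posCone n) (hfx : 0 < f x)
    (hgx : 0 < g x) {i : Fin n} (hf' : 0 < D1 n f x i) (hg' : 0 < D1 n g x i) :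
    0 < D1 n (fun y => f y ^ a * g y ^ b) x i :=
  have hx_nhds := (isOpen_posCone n).mem_nhds hx
  fderiv_rpow_mul_rpow_apply_pos ha hb (hf.differentiableAt hx_nhds) (hg.differentiableAt hx_nhds)
    hfx hgx hf' hg'

lemma dualF_nonneg (hf : ∀ x ∈ posCone n, 0 ≤ f x) : ∀ x ∈ posCone n, 0 ≤ dualF n f x :=
  fun _ hx => inv_nonneg.2 (hf _ (inv_mem_posCone hx))

lemma dualF_rpow_mul_rpow (hf : ∀ x ∈ posCone n, 0 ≤ f x) (hg : ∀ x ∈ posCone n, 0 ≤ g x) (a b : ℝ)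
    {x : Fin n → ℝ} (hx : x ∈ posCone n) :
    dualF n (fun y => f y ^ a * g y ^ b) x = dualF n f x ^ a * dualF n g x ^ b := by
  have hx_inv := inv_mem_posCone hx
  change (f x⁻¹ ^ a * g x⁻¹ ^ b)⁻¹ = (f x⁻¹)⁻¹ ^ a * (g x⁻¹)⁻¹ ^ b
  rw [Real.inv_rpow (hf _ hx_inv), Real.inv_rpow (hg _ hx_inv), mul_inv]

lemma concaveOn_dualF_rpow_mul_rpow (ha : 0 < a) (hb : 0 < b) (hab : a + b = 1)
    (hf₀ : ∀ x ∈ posCone n, 0 ≤ f x) (hg₀ : ∀ x ∈ posCone n, 0 ≤ g x)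
    (hf : ConcaveOn ℝ (posCone n) (dualF n f)) (hg : ConcaveOn ℝ (posCone n) (dualF n g)) :
    ConcaveOn ℝ (posCone n) (dualF n fun y => f y ^ a * g y ^ b) :=
  (concaveOn_rpow_mul_rpow ha hb hab hf hg (dualF_nonneg hf₀) (dualF_nonneg hg₀)).congr
    fun _ hx => (dualF_rpow_mul_rpow hf₀ hg₀ a b hx).symm

lemma tendsto_dualF_rpow_mul_rpow_zero (ha : 0 ≤ a) (hb : 0 < b)
    (hf₀ : ∀ x ∈ posCone n, 0 ≤ f x) (hg₀ : ∀ x ∈ posCone n, 0 ≤ g x)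
    (hf : ConcaveOn ℝ (posCone n) (dualF n f)) {ι : Type*} {l : Filter ι} {z : ι → Fin n → ℝ}
    (hz : ∀ j, z j ∈ posCone n) (hz_bdd : BddAbove (Set.range z))
    (hg : Tendsto (fun j => dualF n g (z j)) l (𝓝 0)) :
    Tendsto (fun j => dualF n (fun y => f y ^ a * g y ^ b) (z j)) l (𝓝 0) := by
  have dual_f_bdd : BddAbove (Set.range fun j => dualF n f (z j)) := by
    rw [Set.range_comp']
    exact bddAbove_image_of_concaveOn_posCone hf (dualF_nonneg hf₀) (Set.range_subset_iff.2 hz)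
      hz_bdd
  simp only [dualF_rpow_mul_rpow hf₀ hg₀ a b (hz _)]
  exact tendsto_rpow_mul_rpow_zero ha hb (.of_forall fun j => dualF_nonneg hf₀ _ (hz j))
    dual_f_bdd.isBoundedUnder_of_range hg

end PositiveCone

/-- if `G₁` is smooth, symmetric, positive, strictly increasing, 1-homogeneous
and inverse concave, and `G₂` is likewise with dual approaching zero on the boundary of Γ₊,
then for `0 < σ < 1` the function `F = G₁^σ G₂^{1−σ}` is smooth, symmetric, strictly
increasing, 1-homogeneous, has `F_* = (G₁)_*^σ (G₂)_*^{1−σ}`, is inverse concave, and its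
dual approaches zero on the boundary of Γ₊. -/
theorem geometric_mean_inverse_concave (n : ℕ) (hn : 2 ≤ n) (σ : ℝ) (hσ0 : 0 < σ)
    (hσ1 : σ < 1) (G₁ G₂ : (Fin n → ℝ) → ℝ)
    (hG₁smooth : ContDiffOn ℝ (⊤ : ℕ∞) G₁ (posCone n))
    (hG₁sym : ∀ π : Equiv.Perm (Fin n), ∀ x ∈ posCone n, G₁ (x ∘ π) = G₁ x)
    (hG₁pos : ∀ x ∈ posCone n, 0 < G₁ x)
    (hG₁mono : ∀ x ∈ posCone n, ∀ i, 0 < D1 n G₁ x i)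
    (hG₁hom : ∀ k : ℝ, 0 < k → ∀ x ∈ posCone n, G₁ (k • x) = k * G₁ x)
    (hG₁inv : ConcaveOn ℝ (posCone n) (dualF n G₁))
    (hG₂smooth : ContDiffOn ℝ (⊤ : ℕ∞) G₂ (posCone n))
    (hG₂sym : ∀ π : Equiv.Perm (Fin n), ∀ x ∈ posCone n, G₂ (x ∘ π) = G₂ x)
    (hG₂pos : ∀ x ∈ posCone n, 0 < G₂ x)
    (hG₂mono : ∀ x ∈ posCone n, ∀ i, 0 < D1 n G₂ x i)
    (hG₂hom : ∀ k : ℝ, 0 < k → ∀ x ∈ posCone n, G₂ (k • x) = k * G₂ x)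
    (hG₂inv : ConcaveOn ℝ (posCone n) (dualF n G₂))
    (hG₂bdry : ∀ (z : ℕ → Fin n → ℝ) (p : Fin n → ℝ), (∀ j, z j ∈ posCone n) →
      p ∈ frontier (posCone n) → Tendsto z atTop (𝓝 p) →
      Tendsto (fun j => dualF n G₂ (z j)) atTop (𝓝 0)) :
    ContDiffOn ℝ (⊤ : ℕ∞) (fun x => G₁ x ^ σ * G₂ x ^ (1 - σ)) (posCone n) ∧
    (∀ π : Equiv.Perm (Fin n), ∀ x ∈ posCone n,
      G₁ (x ∘ π) ^ σ * G₂ (x ∘ π) ^ (1 - σ) = G₁ x ^ σ * G₂ x ^ (1 - σ)) ∧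
    (∀ x ∈ posCone n, ∀ i, 0 < D1 n (fun y => G₁ y ^ σ * G₂ y ^ (1 - σ)) x i) ∧
    (∀ k : ℝ, 0 < k → ∀ x ∈ posCone n,
      G₁ (k • x) ^ σ * G₂ (k • x) ^ (1 - σ) = k * (G₁ x ^ σ * G₂ x ^ (1 - σ))) ∧
    (∀ x ∈ posCone n, dualF n (fun y => G₁ y ^ σ * G₂ y ^ (1 - σ)) x
        = dualF n G₁ x ^ σ * dualF n G₂ x ^ (1 - σ)) ∧
    ConcaveOn ℝ (posCone n) (dualF n (fun y => G₁ y ^ σ * G₂ y ^ (1 - σ))) ∧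
    (∀ (z : ℕ → Fin n → ℝ) (p : Fin n → ℝ), (∀ j, z j ∈ posCone n) →
      p ∈ frontier (posCone n) → Tendsto z atTop (𝓝 p) →
      Tendsto (fun j => dualF n (fun y => G₁ y ^ σ * G₂ y ^ (1 - σ)) (z j)) atTop (𝓝 0)) := by
  have hτ : 0 < 1 - σ := sub_pos.2 hσ1
  have hστ : σ + (1 - σ) = 1 := add_sub_cancel σ 1
  have hG₁nonneg : ∀ x ∈ posCone n, 0 ≤ G₁ x := fun x hx => (hG₁pos x hx).le
  have hG₂nonneg : ∀ x ∈ posCone n, 0 ≤ G₂ x := fun x hx => (hG₂pos x hx).le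
  refine ⟨?smooth, ?symmetric, ?increasing, ?homogeneous,
    fun x hx => dualF_rpow_mul_rpow hG₁nonneg hG₂nonneg σ (1 - σ) hx,
    concaveOn_dualF_rpow_mul_rpow hσ0 hτ hστ hG₁nonneg hG₂nonneg hG₁inv hG₂inv, ?boundary⟩
  case smooth =>
    exact (hG₁smooth.rpow_const_of_ne fun x hx => (hG₁pos x hx).ne').mul
      (hG₂smooth.rpow_const_of_ne fun x hx => (hG₂pos x hx).ne')
  case symmetric => exact fun π x hx => by rw [hG₁sym π x hx, hG₂sym π x hx]
  case increasing =>
    exact fun x hx i => D1_rpow_mul_rpow_pos hσ0 hτ (hG₁smooth.differentiableOn (by simp))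
      (hG₂smooth.differentiableOn (by simp)) hx (hG₁pos x hx) (hG₂pos x hx) (hG₁mono x hx i)
      (hG₂mono x hx i)
  case homogeneous =>
    exact fun k hk x hx => by rw [hG₁hom k hk x hx, hG₂hom k hk x hx,
      mul_rpow_mul_mul_rpow hk.le (hG₁nonneg x hx) (hG₂nonneg x hx) hστ]
  case boundary =>
    exact fun z p hz hp hzp => tendsto_dualF_rpow_mul_rpow_zero hσ0.le hτ hG₁nonneg hG₂nonneg hG₁inv
      hz (Metric.isBounded_range_of_tendsto z hzp).bddAbove (hG₂bdry z p hz hp hzp)
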